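/- Fix n ≥ 1 and partitions λ ≥ λ̂ of n in dominance order. Let ρ, ρ̂ be the unit point masses at λ and λ̂ on the set of partitions of n. Then the projections π^n_{n−1}ρ and π^n_{n−1}ρ̂ satisfy: π^n_{n−1}ρ stochastically dominates π^n_{n−1}ρ̂ with respect to the dominance order on partitions of n−1. -/

import Mathlib

open scoped BigOperators

def isPartition (f : ℕ → ℕ) : Prop :=
  (∀ ⦃a b : ℕ⦄, a ≤ b → f b ≤ f a) ∧ ∃ N, ∀ a, N ≤ a → f a = 0

noncomputable def psize (f : ℕ → ℕ) : ℕ := ∑ᶠ a, f a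

def addBox (mu lam : ℕ → ℕ) : Prop := ∃ r, lam = Function.update mu r (mu r + 1)

noncomputable def dimY (lam : ℕ → ℕ) : ℕ :=
  Set.ncard { p : ℕ → ℕ → ℕ |
    p 0 = (fun _ => 0) ∧ (∀ k, isPartition (p k)) ∧
    (∀ k, k < psize lam → addBox (p k) (p (k + 1))) ∧
    (∀ k, psize lam ≤ k → p k = lam) }

def dominates (lam mu : ℕ → ℕ) : Prop :=
  ∀ k, ∑ a ∈ Finset.range k, mu a ≤ ∑ a ∈ Finset.range k, lam a

def moveBox (lam hatlam : ℕ → ℕ) (i hi : ℕ) : Prop :=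
  lam i = hatlam i + 1 ∧ hatlam hi = lam hi + 1 ∧
  ∀ a, a ≠ i → a ≠ hi → lam a = hatlam a

noncomputable def schurOnes (N : ℕ) (lam : ℕ → ℕ) : ℕ :=
  Set.ncard { T : ℕ → ℕ → ℕ |
    (∀ i j, j < lam i → 1 ≤ T i j ∧ T i j ≤ N) ∧
    (∀ i j, j + 1 < lam i → T i j ≤ T i (j + 1)) ∧
    (∀ i j, j < lam (i + 1) → T i j < T (i + 1) j) ∧
    (∀ i j, lam i ≤ j → T i j = 0) }

noncomputable def projStep (rho : (ℕ → ℕ) → ℝ) : (ℕ → ℕ) → ℝ :=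
  fun mu => ∑ᶠ l ∈ { l : ℕ → ℕ | addBox mu l }, ((dimY mu : ℝ) / (dimY l : ℝ)) * rho l

def isMeasureOn (m : ℕ) (rho : (ℕ → ℕ) → ℝ) : Prop :=
  (∀ f, 0 ≤ rho f) ∧ ∀ f, rho f ≠ 0 → isPartition f ∧ psize f = m

def stochDom (m : ℕ) (rho rho' : (ℕ → ℕ) → ℝ) : Prop :=
  ∀ U : Set (ℕ → ℕ),
    (∀ a ∈ U, ∀ b, isPartition b → psize b = m → dominates b a → b ∈ U) →
    ∑ᶠ f ∈ U, rho' f ≤ ∑ᶠ f ∈ U, rho f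

open Finset in
noncomputable def vD {N : ℕ} (x : Fin N → ℝ) : ℝ := ∏ i : Fin N, ∏ j ∈ Finset.Ioi i, (x j - x i)

theorem vD_eq_det {N : ℕ} (x : Fin N → ℝ) :
    vD x = (Matrix.of (fun i j : Fin N => (descPochhammer ℝ (j : ℕ)).eval (x i))).det := by
  rw [← Matrix.det_eval_matrixOfPolynomials_eq_det_vandermonde x
    (fun j => descPochhammer ℝ (j : ℕ)) (fun i => descPochhammer_natDegree ℝ _)
    (fun i => monic_descPochhammer ℝ _), Matrix.det_vandermonde]
  rfl

/-- sum over rows, scaling by a diagonal -/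
theorem sum_det_row_diag {N : ℕ} (M : Matrix (Fin N) (Fin N) ℝ) (d : Fin N → ℝ) :
    ∑ r, (M.updateRow r (fun j => d j * M r j)).det = (∑ j, d j) * M.det := by
  simp only [Matrix.det_apply']
  rw [Finset.sum_comm, Finset.mul_sum]
  refine Finset.sum_congr rfl fun σ _ => ?_
  have : ∀ r : Fin N, ∏ i, (M.updateRow r (fun j => d j * M r j)) (σ i) i
      = d (σ⁻¹ r) * ∏ i, M (σ i) i := by
    intro r
    rw [← Finset.mul_prod_erase _ _ (Finset.mem_univ (σ⁻¹ r)),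
      ← Finset.mul_prod_erase _ (fun i => M (σ i) i) (Finset.mem_univ (σ⁻¹ r))]
    rw [← mul_assoc]
    congr 1
    · simp
    · refine Finset.prod_congr rfl fun i hi => ?_
      rw [Matrix.updateRow_ne]
      rintro rfl
      simp at hi
  simp only [this]
  rw [← Finset.mul_sum, ← Finset.sum_mul, Equiv.sum_comp σ⁻¹ d]
  ring

theorem descP_shift (x : ℝ) (j : ℕ) :
    x * (descPochhammer ℝ j).eval (x - 1) = (x - j) * (descPochhammer ℝ j).eval x := by
  have h1 : (descPochhammer ℝ (j+1)).eval x = x * (descPochhammer ℝ j).eval (x-1) := by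
    rw [descPochhammer_succ_left]; simp
  rw [← h1, descPochhammer_succ_right]; simp; ring

theorem vD_recursion {N : ℕ} (x : Fin N → ℝ) :
    ∑ r, x r * vD (Function.update x r (x r - 1)) = (∑ r, x r - ∑ r : Fin N, (r : ℝ)) * vD x := by
  set M : Matrix (Fin N) (Fin N) ℝ :=
    Matrix.of (fun i j : Fin N => (descPochhammer ℝ (j : ℕ)).eval (x i)) with hM
  have key : ∀ r, x r * vD (Function.update x r (x r - 1)) =
      x r * M.det - (M.updateRow r (fun j => (j : ℝ) * M r j)).det := by
    intro r
    rw [vD_eq_det]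
    have e1 : (Matrix.of (fun i j : Fin N =>
        (descPochhammer ℝ (j : ℕ)).eval (Function.update x r (x r - 1) i)))
        = M.updateRow r (fun j => (descPochhammer ℝ (j : ℕ)).eval (x r - 1)) := by
      ext i j
      by_cases h : i = r
      · subst h; simp
      · simp [h, hM]
    rw [e1, ← Matrix.det_updateRow_smul]
    have e2 : (x r • fun j : Fin N => (descPochhammer ℝ (j : ℕ)).eval (x r - 1))
        = x r • M r + (-1 : ℝ) • (fun j : Fin N => (j : ℝ) * M r j) := by
      ext j
      have := descP_shift (x r) j
      simp [hM]
      rw [this]; ring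
    rw [e2, Matrix.det_updateRow_add, Matrix.det_updateRow_smul, Matrix.det_updateRow_smul,
      Matrix.updateRow_eq_self]
    ring
  simp only [key, Finset.sum_sub_distrib]
  rw [sum_det_row_diag, ← Finset.sum_mul, vD_eq_det, sub_mul]

theorem vD_update {N : ℕ} (x : Fin N → ℝ) (r : Fin N) (y : ℝ) :
    vD (Function.update x r y) * ∏ b ∈ Finset.univ.erase r, (x r - x b)
      = vD x * ∏ b ∈ Finset.univ.erase r, (y - x b) := by
  -- factor out the row r
  have key : ∃ C : ℝ, ∀ y : ℝ, vD (Function.update x r y)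
      = C * ∏ b ∈ Finset.univ.erase r, (y - x b) := by
    refine ⟨(∏ b ∈ Finset.univ.erase r, (if r < b then (-1 : ℝ) else 1)) *
      ∏ i ∈ Finset.univ.erase r, ∏ j ∈ Finset.univ.erase r,
        (if i < j then (x j - x i) else 1), fun y => ?_⟩
    have e : ∀ z : Fin N → ℝ, vD z = ∏ i, ∏ j, (if i < j then z j - z i else 1) := by
      intro z
      unfold vD
      refine Finset.prod_congr rfl fun i _ => ?_
      rw [← Finset.prod_filter]
      refine Finset.prod_congr ?_ fun _ _ => rfl
      ext j; simp
    rw [e, ← Finset.mul_prod_erase _ _ (Finset.mem_univ r)]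
    have e2 : ∀ i ∈ Finset.univ.erase r, (∏ j, (if i < j then
        (Function.update x r y) j - (Function.update x r y) i else 1))
        = (if i < r then y - x i else 1) * ∏ j ∈ Finset.univ.erase r,
        (if i < j then (x j - x i) else 1) := by
      intro i hi
      have hi' : i ≠ r := by simpa using hi
      rw [← Finset.mul_prod_erase _ _ (Finset.mem_univ r)]
      congr 1
      · simp [hi']
      · refine Finset.prod_congr rfl fun j hj => ?_
        have hj' : j ≠ r := by simpa using hj
        simp [hi', hj']
    rw [Finset.prod_congr rfl e2, Finset.prod_mul_distrib,
      ← Finset.mul_prod_erase _ _ (Finset.mem_univ r)]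
    have e3 : (∏ j ∈ Finset.univ.erase r, (if r < j then
        (Function.update x r y) j - (Function.update x r y) r else 1)) *
        (∏ i ∈ Finset.univ.erase r, (if i < r then y - x i else 1)) =
        (∏ b ∈ Finset.univ.erase r, (if r < b then (-1 : ℝ) else 1)) *
        ∏ b ∈ Finset.univ.erase r, (y - x b) := by
      rw [← Finset.prod_mul_distrib, ← Finset.prod_mul_distrib]
      refine Finset.prod_congr rfl fun j hj => ?_
      have hj' : j ≠ r := by simpa using hj
      rcases lt_or_gt_of_ne hj' with h | h
      · simp [h, h.not_gt]
      · simp [h, h.not_gt, hj']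
    simp only [lt_irrefl, if_false, one_mul]
    rw [← mul_assoc, e3]; ring
  obtain ⟨C, hC⟩ := key
  have h0 := hC (x r)
  rw [Function.update_eq_self] at h0
  rw [hC, h0]; ring

theorem vD_ne_zero {N : ℕ} (x : Fin N → ℝ) (hx : Function.Injective x) : vD x ≠ 0 := by
  unfold vD
  refine Finset.prod_ne_zero_iff.2 fun i _ => Finset.prod_ne_zero_iff.2 fun j hj => ?_
  rw [sub_ne_zero]
  intro h
  have := hx h
  simp at hj
  omega

theorem vD_eq_zero {N : ℕ} (x : Fin N → ℝ) (i j : Fin N) (hij : i < j) (h : x i = x j) :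
    vD x = 0 := by
  unfold vD
  refine Finset.prod_eq_zero (Finset.mem_univ i) (Finset.prod_eq_zero (i := j) (by simpa using hij) ?_)
  rw [h, sub_self]

/-- coupling inequality -/
theorem coupling {N : ℕ} (p q : Fin N → ℝ) (A B : Fin N → Prop) [DecidablePred A] [DecidablePred B]
    (i j : ℕ) (hp : ∀ r, 0 ≤ p r) (hq : ∀ r, 0 ≤ q r)
    (sp : ∑ r, p r = 1) (sq : ∑ r, q r = 1)
    (h1 : ∀ s, A s → ∀ r, p r ≠ 0 → (s ≤ r ∨ (i ≤ (r : ℕ) ∧ (s : ℕ) ≤ j)) → B r)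
    (hj : ∀ r : Fin N, j < r → q r ≤ p r) (hi : ∀ r : Fin N, (r : ℕ) < i → p r ≤ q r) :
    ∑ r, (if A r then q r else 0) ≤ ∑ r, (if B r then p r else 0) := by
  by_cases hA : ∃ s, A s ∧ (s : ℕ) ≤ j
  · obtain ⟨s, hs, hsj⟩ := hA
    have : ∑ r, (if B r then 0 else p r) ≤ ∑ r, (if A r then 0 else q r) := by
      refine Finset.sum_le_sum fun r _ => ?_
      by_cases hpr : p r = 0
      · rw [hpr]; have := hq r; split_ifs <;> simp [this]
      · by_cases hB : B r
        · have := hq r; split_ifs <;> simp [this]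
        · have hri : (r : ℕ) < i := by
            by_contra hc
            exact hB (h1 s hs r hpr (Or.inr ⟨by omega, hsj⟩))
          have hAr : ¬ A r := fun h => hB (h1 r h r hpr (Or.inl le_rfl))
          rw [if_neg hB, if_neg hAr]; exact hi r hri
    have e1 : ∑ r, (if B r then p r else 0) + ∑ r, (if B r then 0 else p r) = 1 := by
      rw [← Finset.sum_add_distrib, ← sp]
      refine Finset.sum_congr rfl fun r _ => ?_
      split_ifs <;> simp
    have e2 : ∑ r, (if A r then q r else 0) + ∑ r, (if A r then 0 else q r) = 1 := by
      rw [← Finset.sum_add_distrib, ← sq]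
      refine Finset.sum_congr rfl fun r _ => ?_
      split_ifs <;> simp
    linarith
  · push Not at hA
    refine Finset.sum_le_sum fun r _ => ?_
    by_cases hAr : A r
    · have h2 := hj r (hA r hAr)
      rw [if_pos hAr]
      by_cases hpr : p r = 0
      · have := hp r
        split_ifs <;> linarith
      · rw [if_pos (h1 r hAr r hpr (Or.inl le_rfl))]; exact h2
    · rw [if_neg hAr]; have := hp r; split_ifs <;> simp [this]

def subBox (f : ℕ → ℕ) (r : ℕ) : ℕ → ℕ := Function.update f r (f r - 1)

def pathSet (lam : ℕ → ℕ) : Set (ℕ → ℕ → ℕ) :=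
  { p : ℕ → ℕ → ℕ |
    p 0 = (fun _ => 0) ∧ (∀ k, isPartition (p k)) ∧
    (∀ k, k < psize lam → addBox (p k) (p (k + 1))) ∧
    (∀ k, psize lam ≤ k → p k = lam) }

theorem dimY_eq (lam : ℕ → ℕ) : dimY lam = (pathSet lam).ncard := rfl

def bdd (N : ℕ) (f : ℕ → ℕ) : Prop := ∀ a, N ≤ a → f a = 0

theorem psize_eq {N : ℕ} {f : ℕ → ℕ} (h : bdd N f) : psize f = ∑ a ∈ Finset.range N, f a := by
  unfold psize
  refine finsum_eq_sum_of_support_subset _ ?_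
  intro a ha
  simp only [Finset.coe_range, Set.mem_Iio]
  by_contra hc
  exact ha (h a (by omega))

theorem psize_eq_fin {N : ℕ} {f : ℕ → ℕ} (h : bdd N f) : psize f = ∑ a : Fin N, f a := by
  rw [psize_eq h, Finset.sum_range]

theorem sum_subBox (f : ℕ → ℕ) (r : ℕ) (hr : 0 < f r) (k : ℕ) :
    ∑ a ∈ Finset.range k, subBox f r a + (if r < k then 1 else 0) = ∑ a ∈ Finset.range k, f a := by
  induction k with
  | zero => simp
  | succ k ih =>
    rw [Finset.sum_range_succ, Finset.sum_range_succ, ← ih]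
    by_cases h : r = k
    · subst h; simp [subBox]; omega
    · have : subBox f r k = f k := by simp [subBox, Ne.symm h]
      rw [this]
      have : (r < k + 1) ↔ r < k := by omega
      simp only [this]; ring

theorem bdd_subBox {N : ℕ} {f : ℕ → ℕ} (h : bdd N f) (r : ℕ) : bdd N (subBox f r) := by
  intro a ha
  have := h a ha
  by_cases hr : a = r
  · subst hr; simp [subBox, this]
  · simp [subBox, hr, this]

theorem lt_of_bdd {N : ℕ} {f : ℕ → ℕ} (h : bdd N f) {r : ℕ} (hr : 0 < f r) : r < N := by
  by_contra hc
  have := h r (by omega)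
  omega

theorem psize_subBox {N : ℕ} {f : ℕ → ℕ} (h : bdd N f) {r : ℕ} (hr : 0 < f r) :
    psize (subBox f r) + 1 = psize f := by
  rw [psize_eq h, psize_eq (bdd_subBox h r), ← sum_subBox f r hr, if_pos (lt_of_bdd h hr)]

theorem addBox_subBox {f : ℕ → ℕ} {r : ℕ} (hr : 0 < f r) : addBox (subBox f r) f := by
  refine ⟨r, ?_⟩
  ext a
  by_cases h : a = r
  · subst h; simp [subBox]; omega
  · simp [subBox, h]

theorem eq_subBox_of_addBox {g f : ℕ → ℕ} (h : addBox g f) : ∃ r, 0 < f r ∧ g = subBox f r := by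
  obtain ⟨r, rfl⟩ := h
  refine ⟨r, by simp, ?_⟩
  ext a
  by_cases h : a = r
  · subst h; simp [subBox]
  · simp [subBox, h]

theorem subBox_inj {f : ℕ → ℕ} {r s : ℕ} (hr : 0 < f r) (h : subBox f r = subBox f s) : r = s := by
  by_contra hc
  have := congrFun h r
  simp [subBox, hc] at this
  omega

theorem dimY_not_partition {f : ℕ → ℕ} (h : ¬ isPartition f) : dimY f = 0 := by
  rw [dimY_eq]
  have he : pathSet f = ∅ := by
    refine Set.eq_empty_of_forall_notMem fun p hp => h ?_
    rw [← hp.2.2.2 (psize f) le_rfl]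
    exact hp.2.1 _
  rw [he, Set.ncard_empty]

def extPath (n : ℕ) (lam : ℕ → ℕ) (p : ℕ → ℕ → ℕ) : ℕ → ℕ → ℕ := fun k => if k ≤ n then p k else lam

theorem pathSet_succ {N n : ℕ} {lam : ℕ → ℕ} (hl : isPartition lam) (hb : bdd N lam)
    (hn : psize lam = n + 1) :
    pathSet lam = ⋃ r ∈ (Finset.range N).filter (fun r => 0 < lam r),
      extPath n lam '' pathSet (subBox lam r) := by
  ext p
  simp only [Set.mem_iUnion, Finset.mem_filter, Finset.mem_range, Set.mem_image, exists_prop]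
  constructor
  · rintro ⟨h0, h1, h2, h3⟩
    rw [hn] at h2 h3
    have ha := h2 n (by omega)
    rw [h3 (n+1) le_rfl] at ha
    obtain ⟨r, hr, hpr⟩ := eq_subBox_of_addBox ha
    have hs : psize (subBox lam r) = n := by have := psize_subBox hb hr; omega
    refine ⟨r, ⟨lt_of_bdd hb hr, hr⟩, fun k => if k ≤ n then p k else p n, ⟨?_, ?_, ?_, ?_⟩, ?_⟩
    · simpa using h0
    · intro k; dsimp only; split_ifs <;> exact h1 _
    · intro k hk
      rw [hs] at hk
      dsimp only
      rw [if_pos (by omega), if_pos (by omega)]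
      exact h2 k (by omega)
    · intro k hk
      rw [hs] at hk
      dsimp only
      split_ifs with h
      · rw [← hpr]; congr 1; omega
      · exact hpr
    · funext k
      unfold extPath
      split_ifs with h
      · exact if_pos h
      · exact (h3 k (by omega)).symm
  · rintro ⟨r, ⟨_, hr⟩, q, ⟨h0, h1, h2, h3⟩, rfl⟩
    have hs : psize (subBox lam r) = n := by have := psize_subBox hb hr; omega
    rw [hs] at h2 h3
    refine ⟨?_, ?_, ?_, ?_⟩
    · simpa [extPath] using h0
    · intro k; unfold extPath; split_ifs
      · exact h1 _
      · exact hl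
    · intro k hk
      rw [hn] at hk
      unfold extPath
      by_cases h : k + 1 ≤ n
      · rw [if_pos (by omega), if_pos h]; exact h2 k (by omega)
      · have : k = n := by omega
        subst this
        simp only [le_refl, if_true, if_neg h]
        rw [h3 k le_rfl]; exact addBox_subBox hr
    · intro k hk
      rw [hn] at hk
      unfold extPath
      rw [if_neg (by omega)]

theorem extPath_injOn {N n : ℕ} {lam : ℕ → ℕ} (hb : bdd N lam)
    (hn : psize lam = n + 1) {r : ℕ} (hr : 0 < lam r) :
    Set.InjOn (extPath n lam) (pathSet (subBox lam r)) := by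
  have hs : psize (subBox lam r) = n := by have := psize_subBox hb hr; omega
  intro p hp q hq h
  funext k
  by_cases hk : k ≤ n
  · have := congrFun h k
    simpa [extPath, hk] using this
  · rw [hp.2.2.2 k (by omega), hq.2.2.2 k (by omega)]

theorem extPath_disj {N n : ℕ} {lam : ℕ → ℕ} (hb : bdd N lam)
    (hn : psize lam = n + 1) {r s : ℕ} (hr : 0 < lam r) (hs : 0 < lam s) (hrs : r ≠ s) :
    Disjoint (extPath n lam '' pathSet (subBox lam r)) (extPath n lam '' pathSet (subBox lam s)) := by
  rw [Set.disjoint_left]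
  rintro _ ⟨p, hp, rfl⟩ ⟨q, hq, h⟩
  have h1 : psize (subBox lam r) = n := by have := psize_subBox hb hr; omega
  have h2 : psize (subBox lam s) = n := by have := psize_subBox hb hs; omega
  have := congrFun h n
  simp only [extPath, le_refl, if_true] at this
  rw [hp.2.2.2 n (by omega), hq.2.2.2 n (by omega)] at this
  exact hrs (subBox_inj hr this.symm)

theorem bdd_isPartition_subBox_not {lam : ℕ → ℕ} (hl : isPartition lam) {r : ℕ}
    (h : ¬ isPartition (subBox lam r)) : lam (r+1) = lam r := by
  by_contra hc
  apply h
  have hlt : lam (r+1) < lam r := lt_of_le_of_ne (hl.1 (by omega)) hc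
  refine ⟨?_, ?_⟩
  · intro a b hab
    by_cases ha : a = r
    · subst ha
      by_cases hbb : b = a
      · subst hbb; rfl
      · have := hl.1 (show a + 1 ≤ b by omega)
        simp [subBox, hbb]; omega
    · have := hl.1 hab
      by_cases hbb : b = r
      · subst hbb; simp [subBox, ha]; omega
      · simpa [subBox, ha, hbb] using this
  · obtain ⟨N, hN⟩ := hl.2
    exact ⟨N, bdd_subBox hN r⟩

theorem pathSet_finite {N : ℕ} (n : ℕ) : ∀ lam : ℕ → ℕ, bdd N lam → psize lam = n →
    (pathSet lam).Finite := by
  induction n with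
  | zero =>
    intro lam hb hn
    refine Set.Finite.subset (Set.finite_singleton (fun _ => lam)) ?_
    intro p hp
    simp only [Set.mem_singleton_iff]
    funext k
    exact hp.2.2.2 k (by omega)
  | succ n ih =>
    intro lam hb hn
    by_cases hl : isPartition lam
    · rw [pathSet_succ hl hb hn]
      refine Set.Finite.biUnion (Finset.finite_toSet _) fun r hr => ?_
      have hr' : 0 < lam r := by simpa using (Finset.mem_filter.1 hr).2
      exact (ih _ (bdd_subBox hb r) (by have := psize_subBox hb hr'; omega)).image _
    · convert Set.finite_empty
      refine Set.eq_empty_of_forall_notMem fun p hp => hl ?_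
      rw [← hp.2.2.2 (psize lam) le_rfl]
      exact hp.2.1 _

theorem dimY_succ {N n : ℕ} {lam : ℕ → ℕ} (hl : isPartition lam) (hb : bdd N lam)
    (hn : psize lam = n + 1) :
    dimY lam = ∑ r : Fin N, if 0 < lam r then dimY (subBox lam r) else 0 := by
  classical
  rw [dimY_eq, pathSet_succ hl hb hn, ← Finset.sum_range (fun r => if 0 < lam r then dimY (subBox lam r) else 0),
    ← Finset.sum_filter]
  rw [← Finset.set_biUnion_coe, Set.Finite.ncard_biUnion (Finset.finite_toSet _),
    finsum_mem_coe_finset]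
  · refine Finset.sum_congr rfl fun r hr => ?_
    have hr' : 0 < lam r := (Finset.mem_filter.1 hr).2
    rw [Set.InjOn.ncard_image (extPath_injOn hb hn hr')]
    rfl
  · intro r hr
    have hr' : 0 < lam r := (Finset.mem_filter.1 hr).2
    exact (pathSet_finite n _ (bdd_subBox hb r) (by have := psize_subBox hb hr'; omega)).image _
  · intro r hr s hs hrs
    exact extPath_disj hb hn (Finset.mem_filter.1 hr).2 (Finset.mem_filter.1 hs).2 hrs

noncomputable def xN (N : ℕ) (f : ℕ → ℕ) : Fin N → ℝ := fun a => ((f a + (N - 1 - a) : ℕ) : ℝ)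

noncomputable def hN (N : ℕ) (f : ℕ → ℕ) : ℝ :=
  vD (xN N f) / ∏ a : Fin N, ((f a + (N - 1 - a)).factorial : ℝ)

theorem xN_lt {N : ℕ} {f : ℕ → ℕ} (hl : isPartition f) {a b : Fin N} (hab : a < b) :
    xN N f b + 1 ≤ xN N f a := by
  unfold xN
  have := hl.1 hab.le
  have h2 := a.2
  have h3 := b.2
  have h4 : (a : ℕ) < b := hab
  have : (f b + (N - 1 - b)) + 1 ≤ f a + (N - 1 - a) := by
    have : f b ≤ f a := hl.1 h4.le
    omega
  exact_mod_cast this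

theorem xN_inj {N : ℕ} {f : ℕ → ℕ} (hl : isPartition f) : Function.Injective (xN N f) := by
  intro a b h
  rcases lt_trichotomy a b with h1 | h1 | h1
  · have := xN_lt hl h1; linarith
  · exact h1
  · have := xN_lt hl h1; linarith

theorem xN_subBox {N : ℕ} {f : ℕ → ℕ} {r : Fin N} (hr : 0 < f r) :
    xN N (subBox f r) = Function.update (xN N f) r (xN N f r - 1) := by
  ext a
  by_cases h : a = r
  · subst h
    simp [xN, subBox]
    rw [Nat.cast_sub (by omega)]; push_cast; ring
  · have : (a : ℕ) ≠ r := fun h' => h (Fin.ext h')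
    simp [xN, subBox, h, this]

theorem hN_ne {N : ℕ} {f : ℕ → ℕ} (hl : isPartition f) : hN N f ≠ 0 := by
  unfold hN
  refine div_ne_zero (vD_ne_zero _ (xN_inj hl)) ?_
  exact Finset.prod_ne_zero_iff.2 fun a _ => by positivity

noncomputable def qN (N : ℕ) (f : ℕ → ℕ) (r : Fin N) : ℝ :=
  xN N f r * vD (Function.update (xN N f) r (xN N f r - 1)) / vD (xN N f)

theorem hN_subBox {N : ℕ} {f : ℕ → ℕ} (hl : isPartition f) {r : Fin N} (hr : 0 < f r) :
    hN N (subBox f r) = qN N f r * hN N f := by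
  have hD := vD_ne_zero _ (xN_inj (N := N) hl)
  unfold hN qN
  rw [xN_subBox hr]
  have e : (∏ a : Fin N, ((f a + (N - 1 - a)).factorial : ℝ)) =
      xN N f r * ∏ a : Fin N, ((subBox f r a + (N - 1 - a)).factorial : ℝ) := by
    rw [← Finset.mul_prod_erase _ _ (Finset.mem_univ r),
      ← Finset.mul_prod_erase _ (fun a : Fin N => ((subBox f r a + (N - 1 - a)).factorial : ℝ))
        (Finset.mem_univ r), ← mul_assoc]
    congr 1
    · have h1 : f r + (N - 1 - r) = (subBox f r r + (N - 1 - r)) + 1 := by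
        simp [subBox]; omega
      have h2 : xN N f r = ((subBox f r r + (N - 1 - r) + 1 : ℕ) : ℝ) := by
        unfold xN; rw [h1]
      rw [h2, h1, Nat.factorial_succ]; push_cast; ring
    · refine Finset.prod_congr rfl fun a ha => ?_
      have : (a : ℕ) ≠ r := fun h' => by simp [Fin.ext_iff, h'] at ha
      simp [subBox, this]
  rw [e]
  have h1 : xN N f r ≠ 0 := by
    unfold xN; norm_cast; omega
  have h2 : (∏ a : Fin N, ((subBox f r a + (N - 1 - a)).factorial : ℝ)) ≠ 0 :=
    Finset.prod_ne_zero_iff.2 fun a _ => by positivity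
  field_simp

theorem qN_zero_of_eq {N : ℕ} {f : ℕ → ℕ} {r : Fin N} (h : f (r+1) = f r) (hN : (r : ℕ) + 1 < N) :
    qN N f r = 0 := by
  unfold qN
  rw [vD_eq_zero _ r ⟨r+1, hN⟩ (by simp [Fin.lt_def]), mul_zero, zero_div]
  have hne : (⟨r+1, hN⟩ : Fin N) ≠ r := by simp [Fin.ext_iff]
  rw [Function.update_self, Function.update_of_ne hne]
  unfold xN
  simp only [h]
  have : N - 1 - (r : ℕ) = (N - 1 - (r+1)) + 1 := by omega
  rw [this]; push_cast; ring

theorem qN_zero {N : ℕ} {f : ℕ → ℕ} (hl : isPartition f) {r : Fin N} (hr : f r = 0) :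
    qN N f r = 0 := by
  by_cases h : (r : ℕ) + 1 < N
  · refine qN_zero_of_eq ?_ h
    have := hl.1 (show (r:ℕ) ≤ r + 1 by omega)
    omega
  · unfold qN
    have : xN N f r = 0 := by
      unfold xN; norm_cast; have := r.2; omega
    rw [this]; simp

theorem qN_zero_np {N : ℕ} {f : ℕ → ℕ} (hl : isPartition f) (hb : bdd N f) {r : Fin N}
    (hr : ¬ isPartition (subBox f r)) : qN N f r = 0 := by
  have h := bdd_isPartition_subBox_not hl hr
  rcases Nat.eq_zero_or_pos (f r) with h0 | h0
  · exact qN_zero hl h0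
  · exact qN_zero_of_eq h (lt_of_bdd hb (by omega))

theorem qN_sum {N : ℕ} {f : ℕ → ℕ} (hl : isPartition f) (hb : bdd N f) :
    ∑ r, qN N f r = psize f := by
  have hD := vD_ne_zero _ (xN_inj (N := N) hl)
  unfold qN
  rw [← Finset.sum_div, vD_recursion, mul_div_assoc, div_self hD, mul_one, psize_eq_fin hb]
  unfold xN
  push_cast
  rw [Finset.sum_add_distrib]
  have : ∑ r : Fin N, ((N - 1 - (r : ℕ) : ℕ) : ℝ) = ∑ r : Fin N, ((r : ℕ) : ℝ) := by
    rw [← Equiv.sum_comp Fin.revPerm (fun r : Fin N => ((r : ℕ) : ℝ))]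
    refine Finset.sum_congr rfl fun r _ => ?_
    congr 1
    simp [Fin.val_rev]; omega
  rw [this]; ring

theorem dimY_formula {N : ℕ} (n : ℕ) : ∀ lam : ℕ → ℕ, isPartition lam → bdd N lam →
    psize lam = n → (dimY lam : ℝ) * hN N (fun _ => 0) = n.factorial * hN N lam := by
  induction n with
  | zero =>
    intro lam hl hb hn
    have h0 : lam = fun _ => 0 := by
      funext a
      by_contra hc
      have := psize_subBox hb (r := a) (by omega)
      omega
    have : pathSet lam = {fun _ => lam} := by
      ext p
      simp only [Set.mem_singleton_iff]
      constructor
      · intro hp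
        funext k
        exact hp.2.2.2 k (by omega)
      · rintro rfl
        exact ⟨h0, fun _ => hl, fun k hk => by omega, fun _ _ => rfl⟩
    rw [dimY_eq, this, Set.ncard_singleton, ← h0]; simp
  | succ n ih =>
    intro lam hl hb hn
    rw [dimY_succ hl hb hn]
    push_cast
    rw [Finset.sum_mul]
    have : ∀ r : Fin N, ((if 0 < lam r then (dimY (subBox lam r) : ℝ) else 0)) * hN N (fun _ => 0)
        = n.factorial * hN N lam * qN N lam r := by
      intro r
      split_ifs with h
      · by_cases hp : isPartition (subBox lam r)
        · rw [ih _ hp (bdd_subBox hb r) (by have := psize_subBox hb h; omega), hN_subBox hl h]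
          ring
        · rw [dimY_not_partition hp, qN_zero_np hl hb hp]; simp
      · rw [qN_zero hl (by omega)]; simp
    rw [Finset.sum_congr rfl fun r _ => this r, ← Finset.mul_sum, qN_sum hl hb, hn,
      Nat.factorial_succ]
    push_cast; ring

theorem isPartition_zero : isPartition (fun _ => 0) := ⟨fun _ _ _ => le_rfl, 0, fun _ _ => rfl⟩

theorem dimY_ratio {N n : ℕ} {lam : ℕ → ℕ} (hl : isPartition lam) (hb : bdd N lam)
    (hn : psize lam = n + 1) (r : Fin N) (hr : 0 < lam r) :
    (dimY (subBox lam r) : ℝ) / dimY lam = qN N lam r / (n + 1 : ℝ) := by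
  by_cases hp : isPartition (subBox lam r)
  · have h0 := hN_ne (N := N) isPartition_zero
    have h1 := dimY_formula (n+1) lam hl hb hn
    have h2 := dimY_formula n _ hp (bdd_subBox hb r) (by have := psize_subBox hb hr; omega)
    rw [hN_subBox hl hr] at h2
    have h3 := hN_ne (N := N) hl
    have h4 : (n.factorial : ℝ) ≠ 0 := by positivity
    have h5 : (n + 1 : ℝ) ≠ 0 := by positivity
    rw [Nat.factorial_succ] at h1
    push_cast at h1
    rw [← mul_div_mul_right _ _ h0, h1, h2]
    field_simp
  · rw [dimY_not_partition hp, qN_zero_np hl hb hp]; simp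

theorem qN_nonneg {N n : ℕ} {lam : ℕ → ℕ} (hl : isPartition lam) (hb : bdd N lam)
    (hn : psize lam = n + 1) (r : Fin N) : 0 ≤ qN N lam r := by
  rcases Nat.eq_zero_or_pos (lam r) with h | h
  · rw [qN_zero hl h]
  · have h1 := dimY_ratio hl hb hn r h
    have h5 : (0:ℝ) < (n + 1 : ℝ) := by positivity
    have h2 : 0 ≤ qN N lam r / (n + 1 : ℝ) := by rw [← h1]; positivity
    have := mul_nonneg h2 h5.le
    rwa [div_mul_cancel₀ _ h5.ne'] at this

theorem div_mul_div_congr {a b c d a' b' c' d' : ℝ} (ha : a = a') (hb : b = b') (hc : c = c')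
    (hd : d = d') : a / b * (c / d) = a' / b' * (c' / d') := by
  rw [ha, hb, hc, hd]

theorem qN_prod {N : ℕ} {f : ℕ → ℕ} (hl : isPartition f) (r : Fin N) :
    qN N f r = xN N f r *
      ∏ b ∈ Finset.univ.erase r, ((xN N f r - 1 - xN N f b) / (xN N f r - xN N f b)) := by
  have hD := vD_ne_zero _ (xN_inj (N := N) hl)
  have h := vD_update (xN N f) r (xN N f r - 1)
  have hne : ∏ b ∈ Finset.univ.erase r, (xN N f r - xN N f b) ≠ 0 := by
    refine Finset.prod_ne_zero_iff.2 fun b hb => ?_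
    rw [sub_ne_zero]
    intro hc
    have := xN_inj hl hc
    simp [this] at hb
  unfold qN
  rw [Finset.prod_div_distrib, mul_div_assoc]
  congr 1
  rw [div_eq_div_iff hD hne, h]; ring

theorem factor_nonneg {N : ℕ} {f : ℕ → ℕ} (hl : isPartition f) (r b : Fin N) (hb : b ≠ r) :
    0 ≤ (xN N f r - 1 - xN N f b) / (xN N f r - xN N f b) := by
  rcases lt_or_gt_of_ne hb with h | h
  · have := xN_lt hl h
    exact div_nonneg_of_nonpos (by linarith) (by linarith)
  · have := xN_lt hl h
    exact div_nonneg (by linarith) (by linarith)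

theorem ineq_low (u v : ℝ) (hu : 2 ≤ u) (hv : u + 1 ≤ v) :
    ((-1 - v) / (-v)) * ((-1 - u) / (-u)) ≤
      ((-1 - (v + 1)) / (-(v + 1))) * ((-1 - (u - 1)) / (-(u - 1))) := by
  have h1 : 0 < v * u := by nlinarith
  have h2 : 0 < (v + 1) * (u - 1) := by nlinarith
  rw [div_mul_div_comm, div_mul_div_comm, div_le_div_iff₀ (by linarith) (by linarith)]
  nlinarith [mul_nonneg (show 0 ≤ v + 1 - u by linarith) (show 0 ≤ v + 1 + u by linarith)]

theorem ineq_high (a b : ℝ) (ha : 2 ≤ a) (hb : a + 1 ≤ b) :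
    ((a - 1 - 1) / (a - 1)) * ((b + 1 - 1) / (b + 1)) ≤ ((a - 1) / a) * ((b - 1) / b) := by
  have h1 : 0 < a * b := by nlinarith
  have h2 : 0 < (a - 1) * (b + 1) := by nlinarith
  rw [div_mul_div_comm, div_mul_div_comm, div_le_div_iff₀ (by linarith) (by linarith)]
  nlinarith [mul_nonneg (show 0 ≤ b - (a - 1) by linarith) (show 0 ≤ b + (a - 1) by linarith)]

theorem xN_move {N : ℕ} {lam hatlam : ℕ → ℕ} {i j : Fin N} (hij : i < j)
    (hm : moveBox lam hatlam i j) :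
    xN N lam i = xN N hatlam i + 1 ∧ xN N lam j = xN N hatlam j - 1 ∧
      ∀ a, a ≠ i → a ≠ j → xN N lam a = xN N hatlam a := by
  obtain ⟨h1, h2, h3⟩ := hm
  refine ⟨?_, ?_, ?_⟩
  · simp only [xN, h1]; push_cast; ring
  · simp only [xN, h2]; push_cast; ring
  · intro a hi hj
    simp only [xN]
    rw [h3 a (fun h => hi (Fin.ext h)) (fun h => hj (Fin.ext h))]

theorem qN_split {N : ℕ} {f : ℕ → ℕ} (hl : isPartition f) (r i j : Fin N) (hir : i ≠ r)
    (hjr : j ≠ r) (hij : i ≠ j) :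
    qN N f r = (xN N f r * ∏ b ∈ ((Finset.univ.erase r).erase i).erase j,
        ((xN N f r - 1 - xN N f b) / (xN N f r - xN N f b))) *
      (((xN N f r - 1 - xN N f i) / (xN N f r - xN N f i)) *
        ((xN N f r - 1 - xN N f j) / (xN N f r - xN N f j))) := by
  rw [qN_prod hl, ← Finset.mul_prod_erase _ _ (show i ∈ Finset.univ.erase r by simp [hir]),
    ← Finset.mul_prod_erase _ _ (show j ∈ (Finset.univ.erase r).erase i by simp [hjr, hij.symm])]
  ring

theorem qN_move_aux {N : ℕ} {lam hatlam : ℕ → ℕ} (hl : isPartition lam) (hh : isPartition hatlam)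
    {i j r : Fin N} (hij : i < j) (hm : moveBox lam hatlam i j) (hir : i ≠ r) (hjr : j ≠ r) :
    ∃ C : ℝ, 0 ≤ C ∧
    qN N lam r = C * (((xN N hatlam r - 1 - (xN N hatlam i + 1)) / (xN N hatlam r - (xN N hatlam i + 1))) *
        ((xN N hatlam r - 1 - (xN N hatlam j - 1)) / (xN N hatlam r - (xN N hatlam j - 1)))) ∧
    qN N hatlam r = C * (((xN N hatlam r - 1 - xN N hatlam i) / (xN N hatlam r - xN N hatlam i)) *
        ((xN N hatlam r - 1 - xN N hatlam j) / (xN N hatlam r - xN N hatlam j))) := by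
  obtain ⟨h1, h2, h3⟩ := xN_move hij hm
  refine ⟨xN N hatlam r * ∏ b ∈ ((Finset.univ.erase r).erase i).erase j,
        ((xN N hatlam r - 1 - xN N hatlam b) / (xN N hatlam r - xN N hatlam b)), ?_, ?_,
        qN_split hh r i j hir hjr hij.ne⟩
  · refine mul_nonneg (by unfold xN; positivity) (Finset.prod_nonneg fun b hb => ?_)
    refine factor_nonneg hh r b ?_
    simp at hb; exact hb.2.2
  · rw [qN_split hl r i j hir hjr hij.ne, h1, h2, h3 r hir.symm hjr.symm]
    congr 2
    refine Finset.prod_congr rfl fun b hb => ?_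
    simp at hb
    rw [h3 b hb.2.1 hb.1]

theorem qN_move_low {N : ℕ} {lam hatlam : ℕ → ℕ} (hl : isPartition lam) (hh : isPartition hatlam)
    {i j r : Fin N} (hij : i < j) (hm : moveBox lam hatlam i j) (hr : j < r) :
    qN N hatlam r ≤ qN N lam r := by
  obtain ⟨C, hC, e1, e2⟩ := qN_move_aux hl hh hij hm (hij.trans hr).ne hr.ne
  obtain ⟨h1, h2, h3⟩ := xN_move hij hm
  have k1 := xN_lt hl hr
  have k2 := xN_lt hh hij
  rw [h2, h3 r (hij.trans hr).ne' hr.ne'] at k1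
  rw [e1, e2]
  refine mul_le_mul_of_nonneg_left ?_ hC
  have := ineq_low (xN N hatlam j - xN N hatlam r) (xN N hatlam i - xN N hatlam r)
    (by linarith) (by linarith)
  refine le_of_eq_of_le (div_mul_div_congr ?_ ?_ ?_ ?_)
    (le_of_le_of_eq this (div_mul_div_congr ?_ ?_ ?_ ?_)) <;> ring

theorem qN_move_high {N : ℕ} {lam hatlam : ℕ → ℕ} (hl : isPartition lam) (hh : isPartition hatlam)
    {i j r : Fin N} (hij : i < j) (hm : moveBox lam hatlam i j) (hr : r < i) :
    qN N lam r ≤ qN N hatlam r := by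
  obtain ⟨C, hC, e1, e2⟩ := qN_move_aux hl hh hij hm hr.ne' (hr.trans hij).ne'
  obtain ⟨h1, h2, h3⟩ := xN_move hij hm
  have k1 := xN_lt hl hr
  have k2 := xN_lt hh hij
  rw [h1, h3 r hr.ne (hr.trans hij).ne] at k1
  rw [e1, e2]
  refine mul_le_mul_of_nonneg_left ?_ hC
  have := ineq_high (xN N hatlam r - xN N hatlam i) (xN N hatlam r - xN N hatlam j)
    (by linarith) (by linarith)
  refine le_of_eq_of_le (div_mul_div_congr ?_ ?_ ?_ ?_)
    (le_of_le_of_eq this (div_mul_div_congr ?_ ?_ ?_ ?_)) <;> ring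

theorem sum_move {lam hatlam : ℕ → ℕ} {i j : ℕ} (hij : i < j) (hm : moveBox lam hatlam i j) (k : ℕ) :
    ∑ a ∈ Finset.range k, lam a + (if j < k then 1 else 0) =
      ∑ a ∈ Finset.range k, hatlam a + (if i < k then 1 else 0) := by
  obtain ⟨h1, h2, h3⟩ := hm
  induction k with
  | zero => simp
  | succ k ih =>
    rw [Finset.sum_range_succ, Finset.sum_range_succ]
    by_cases hi : k = i
    · subst hi
      split_ifs at ih ⊢ <;> omega
    · by_cases hj : k = j
      · subst hj
        split_ifs at ih ⊢ <;> omega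
      · have := h3 k hi hj
        split_ifs at ih ⊢ <;> omega

open Classical in
theorem projStep_atom (lam mu : ℕ → ℕ) :
    projStep (fun f => if f = lam then 1 else 0) mu =
      if addBox mu lam then (dimY mu : ℝ) / dimY lam else 0 := by
  unfold projStep
  rw [finsum_eq_single _ lam]
  · by_cases h : addBox mu lam
    · simp [h]
    · simp [h]
  · intro x hx
    simp [hx]

open Classical in
theorem proj_sum {N n : ℕ} {lam : ℕ → ℕ} (hl : isPartition lam) (hb : bdd N lam)
    (hn : psize lam = n + 1) (U : Set (ℕ → ℕ)) :
    ∑ᶠ f ∈ U, projStep (fun f => if f = lam then 1 else 0) f =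
      ∑ r : Fin N, if (0 < lam r ∧ subBox lam r ∈ U) then qN N lam r / (n + 1 : ℝ) else 0 := by
  simp only [projStep_atom]
  rw [← Finset.sum_filter]
  set T := Finset.univ.filter (fun r : Fin N => 0 < lam r ∧ subBox lam r ∈ U) with hT
  have hTm : ∀ r, r ∈ T ↔ (0 < lam r ∧ subBox lam r ∈ U) := by intro r; simp [hT]
  rw [finsum_mem_inter_support_eq _ U
    ((T.image (fun r : Fin N => subBox lam r) : Finset (ℕ → ℕ)) : Set (ℕ → ℕ))]
  · rw [finsum_mem_coe_finset, Finset.sum_image]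
    · refine Finset.sum_congr rfl fun r hr => ?_
      have hr' := ((hTm r).1 hr).1
      rw [if_pos (addBox_subBox hr'), dimY_ratio hl hb hn r hr']
    · intro r hr s hs h
      exact Fin.ext (subBox_inj ((hTm r).1 hr).1 h)
  · ext f
    simp only [Set.mem_inter_iff, Function.mem_support, Finset.coe_image, Set.mem_image,
      Finset.mem_coe]
    constructor
    · rintro ⟨hf, h⟩
      refine ⟨?_, h⟩
      have ha : addBox f lam := by
        by_contra hc
        exact h (if_neg hc)
      obtain ⟨r, hr, rfl⟩ := eq_subBox_of_addBox ha
      exact ⟨⟨r, lt_of_bdd hb hr⟩, (hTm _).2 ⟨hr, hf⟩, rfl⟩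
    · rintro ⟨⟨r, hr, rfl⟩, h⟩
      exact ⟨((hTm r).1 hr).2, h⟩

open Classical in
theorem step_dom {N n : ℕ} {lam hatlam : ℕ → ℕ} (hl : isPartition lam) (hh : isPartition hatlam)
    (hbl : bdd N lam) (hbh : bdd N hatlam) (hnl : psize lam = n + 1) (hnh : psize hatlam = n + 1)
    {i j : ℕ} (hij : i < j) (hm : moveBox lam hatlam i j) :
    stochDom n (projStep (fun f => if f = lam then 1 else 0))
      (projStep (fun f => if f = hatlam then 1 else 0)) := by
  intro U hU
  rw [proj_sum hl hbl hnl, proj_sum hh hbh hnh]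
  have hjN : j < N := lt_of_bdd hbh (by have := hm.2.1; omega)
  have hpos : (0 : ℝ) < n + 1 := by positivity
  refine coupling (fun r => qN N lam r / (n + 1 : ℝ)) (fun r => qN N hatlam r / (n + 1 : ℝ))
    (fun r => 0 < hatlam r ∧ subBox hatlam r ∈ U) (fun r => 0 < lam r ∧ subBox lam r ∈ U)
    i j ?_ ?_ ?_ ?_ ?_ ?_ ?_
  · intro r; exact div_nonneg (qN_nonneg hl hbl hnl r) hpos.le
  · intro r; exact div_nonneg (qN_nonneg hh hbh hnh r) hpos.le
  · rw [← Finset.sum_div, qN_sum hl hbl, hnl]; push_cast; exact div_self hpos.ne'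
  · rw [← Finset.sum_div, qN_sum hh hbh, hnh]; push_cast; exact div_self hpos.ne'
  · rintro s ⟨hs, hsU⟩ r hr hrs
    have hq : qN N lam r ≠ 0 := fun h => hr (by simp [h])
    have hr0 : 0 < lam r := by
      by_contra hc
      exact hq (qN_zero hl (by omega))
    have hp : isPartition (subBox lam r) := by
      by_contra hc
      exact hq (qN_zero_np hl hbl hc)
    refine ⟨hr0, hU _ hsU _ hp (by have := psize_subBox hbl hr0; omega) ?_⟩
    intro k
    have e1 := sum_subBox lam r hr0 k
    have e2 := sum_subBox hatlam s hs k
    have e3 := sum_move hij hm k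
    have hrs' : (s : ℕ) ≤ r ∨ (i ≤ (r : ℕ) ∧ (s : ℕ) ≤ j) := hrs
    split_ifs at e1 e2 e3 <;> omega
  · intro r hr
    exact div_le_div_of_nonneg_right
      (qN_move_low hl hh (i := ⟨i, by omega⟩) (j := ⟨j, hjN⟩) hij hm hr) hpos.le
  · intro r hr
    exact div_le_div_of_nonneg_right
      (qN_move_high hl hh (i := ⟨i, by omega⟩) (j := ⟨j, hjN⟩) hij hm hr) hpos.le

theorem exists_step {N : ℕ} {lam hatlam : ℕ → ℕ} (hl : isPartition lam) (hh : isPartition hatlam)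
    (hbl : bdd N lam) (hbh : bdd N hatlam) (hs : psize lam = psize hatlam)
    (hd : dominates lam hatlam) (hne : lam ≠ hatlam) :
    ∃ mu i j, i < j ∧ isPartition mu ∧ bdd N mu ∧ psize mu = psize hatlam ∧
      moveBox mu hatlam i j ∧ dominates lam mu := by
  classical
  have hex : ∃ i, lam i ≠ hatlam i := by
    by_contra hc
    push Not at hc
    exact hne (funext hc)
  obtain ⟨i, hi, himin⟩ : ∃ i, lam i ≠ hatlam i ∧ ∀ a < i, lam a = hatlam a :=
    ⟨Nat.find hex, Nat.find_spec hex, fun a ha => by simpa using Nat.find_min hex ha⟩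
  have hSi : ∑ a ∈ Finset.range i, lam a = ∑ a ∈ Finset.range i, hatlam a :=
    Finset.sum_congr rfl fun a ha => himin a (Finset.mem_range.1 ha)
  have hgt : hatlam i < lam i := by
    have := hd (i+1)
    rw [Finset.sum_range_succ, Finset.sum_range_succ] at this
    omega
  have hiN : i < N := lt_of_bdd hbl (by omega)
  have hex2 : ∃ j, i < j ∧ ∑ a ∈ Finset.range (j+1), lam a = ∑ a ∈ Finset.range (j+1), hatlam a := by
    refine ⟨N, hiN, ?_⟩
    rw [Finset.sum_range_succ, Finset.sum_range_succ, ← psize_eq hbl, ← psize_eq hbh,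
      hbl N le_rfl, hbh N le_rfl, hs]
  obtain ⟨j, ⟨hij, hjS⟩, hjmin⟩ : ∃ j, (i < j ∧ ∑ a ∈ Finset.range (j+1), lam a
      = ∑ a ∈ Finset.range (j+1), hatlam a) ∧ ∀ b < j, ¬ (i < b ∧ ∑ a ∈ Finset.range (b+1), lam a
      = ∑ a ∈ Finset.range (b+1), hatlam a) :=
    ⟨Nat.find hex2, Nat.find_spec hex2, fun b hb => Nat.find_min hex2 hb⟩
  have hstrict : ∀ k, i < k → k ≤ j →
      ∑ a ∈ Finset.range k, hatlam a + 1 ≤ ∑ a ∈ Finset.range k, lam a := by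
    intro k hik hkj
    obtain ⟨b, rfl⟩ : ∃ b, k = b + 1 := ⟨k - 1, by omega⟩
    rcases Nat.eq_or_lt_of_le (show i ≤ b by omega) with h | h
    · subst h
      rw [Finset.sum_range_succ, Finset.sum_range_succ]; omega
    · have h1 := hjmin b (by omega)
      have h2 := hd (b+1)
      have : ∑ a ∈ Finset.range (b+1), lam a ≠ ∑ a ∈ Finset.range (b+1), hatlam a :=
        fun h' => h1 ⟨h, h'⟩
      omega
  have hjlt : lam j < hatlam j := by
    have h1 := hstrict j hij le_rfl
    rw [Finset.sum_range_succ, Finset.sum_range_succ] at hjS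
    omega
  have hj1 : hatlam (j+1) < hatlam j := by
    have h1 := hd (j+2)
    rw [Finset.sum_range_succ, Finset.sum_range_succ _ (j+1), hjS] at h1
    have := hl.1 (show j ≤ j + 1 by omega)
    omega
  have hjN : j < N := lt_of_bdd hbh (by omega)
  set mu : ℕ → ℕ := fun a => if a = i then hatlam i + 1 else if a = j then hatlam j - 1 else hatlam a
    with hmu
  have hm : moveBox mu hatlam i j := by
    refine ⟨by simp [hmu], by simp [hmu, hij.ne']; omega, fun a h1 h2 => by simp [hmu, h1, h2]⟩
  have hbm : bdd N mu := by
    intro a ha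
    have : a ≠ i := by omega
    have : a ≠ j := by omega
    simp [hmu, *, hbh a ha]
  refine ⟨mu, i, j, hij, ⟨?_, N, hbm⟩, hbm, ?_, hm, ?_⟩
  · refine antitone_nat_of_succ_le fun a => ?_
    have h0 := hh.1 (show a ≤ a + 1 by omega)
    have h1 : a + 1 = i → lam a = hatlam a := fun h => himin a (by omega)
    have h2 := hl.1 (show a ≤ a + 1 by omega)
    simp only [hmu]
    by_cases c1 : a + 1 = i
    · subst c1
      have := h1 rfl
      have c2 : a ≠ j := by omega
      simp [c2]; omega
    · by_cases c2 : a = j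
      · subst c2
        have c3 : a ≠ i := by omega
        simp [c1, c3]; omega
      · by_cases c3 : a = i
        · subst c3
          simp; split_ifs with h
          · rw [← h]; omega
          · omega
        · simp [c1, c2, c3]; split_ifs with h
          · subst h; omega
          · omega
  · have := sum_move hij hm N
    rw [psize_eq hbm, psize_eq hbh]
    simp [hiN, hjN] at this
    exact this
  · intro k
    have e := sum_move hij hm k
    have e1 := hd k
    have e2 := hstrict k
    split_ifs at e <;> omega

open Classical in
theorem main_aux {N n : ℕ} {lam : ℕ → ℕ} (hl : isPartition lam) (hbl : bdd N lam)
    (hnl : psize lam = n + 1) (m : ℕ) : ∀ hatlam : ℕ → ℕ, isPartition hatlam → bdd N hatlam →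
    psize hatlam = n + 1 → dominates lam hatlam →
    ∑ k ∈ Finset.range N, ∑ a ∈ Finset.range k, lam a ≤
      ∑ k ∈ Finset.range N, ∑ a ∈ Finset.range k, hatlam a + m →
    stochDom n (projStep (fun f => if f = lam then 1 else 0))
      (projStep (fun f => if f = hatlam then 1 else 0)) := by
  induction m with
  | zero =>
    intro hatlam hh hbh hnh hd hW
    by_cases hne : lam = hatlam
    · subst hne; intro U _; exact le_rfl
    · exfalso
      obtain ⟨mu, i, j, hij, hmp, hbm, hsm, hm, hdm⟩ :=
        exists_step hl hh hbl hbh (hnl.trans hnh.symm) hd hne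
      have hjN : j < N := lt_of_bdd hbh (by have := hm.2.1; omega)
      have : ∑ k ∈ Finset.range N, ∑ a ∈ Finset.range k, hatlam a <
          ∑ k ∈ Finset.range N, ∑ a ∈ Finset.range k, mu a := by
        refine Finset.sum_lt_sum (fun k _ => ?_) ⟨j, Finset.mem_range.2 hjN, ?_⟩
        · have := sum_move hij hm k
          split_ifs at this <;> omega
        · have := sum_move hij hm j
          simp [hij] at this; omega
      have h2 : ∑ k ∈ Finset.range N, ∑ a ∈ Finset.range k, mu a ≤
          ∑ k ∈ Finset.range N, ∑ a ∈ Finset.range k, lam a :=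
        Finset.sum_le_sum fun k _ => hdm k
      omega
  | succ m ih =>
    intro hatlam hh hbh hnh hd hW
    by_cases hne : lam = hatlam
    · subst hne; intro U _; exact le_rfl
    · obtain ⟨mu, i, j, hij, hmp, hbm, hsm, hm, hdm⟩ :=
        exists_step hl hh hbl hbh (hnl.trans hnh.symm) hd hne
      have hjN : j < N := lt_of_bdd hbh (by have := hm.2.1; omega)
      have : ∑ k ∈ Finset.range N, ∑ a ∈ Finset.range k, hatlam a <
          ∑ k ∈ Finset.range N, ∑ a ∈ Finset.range k, mu a := by
        refine Finset.sum_lt_sum (fun k _ => ?_) ⟨j, Finset.mem_range.2 hjN, ?_⟩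
        · have := sum_move hij hm k
          split_ifs at this <;> omega
        · have := sum_move hij hm j
          simp [hij] at this; omega
      have h1 := ih mu hmp hbm (hsm.trans hnh) hdm (by omega)
      have h2 := step_dom hmp hh hbm hbh (hsm.trans hnh) hnh hij hm
      intro U hU
      exact (h2 U hU).trans (h1 U hU)

open Classical in
theorem projection_of_atoms_monotone (n : ℕ) (hn : 1 ≤ n)
    (lam hatlam : ℕ → ℕ)
    (hlam : isPartition lam) (hhatlam : isPartition hatlam)
    (hslam : psize lam = n) (hshatlam : psize hatlam = n)
    (hdom : dominates lam hatlam) :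
    stochDom (n - 1)
      (projStep (fun f => if f = lam then 1 else 0))
      (projStep (fun f => if f = hatlam then 1 else 0)) := by
  obtain ⟨n, rfl⟩ : ∃ k, n = k + 1 := ⟨n - 1, by omega⟩
  obtain ⟨N1, h1⟩ := hlam.2
  obtain ⟨N2, h2⟩ := hhatlam.2
  have hb1 : bdd (max N1 N2) lam := fun a ha => h1 a (le_trans (le_max_left _ _) ha)
  have hb2 : bdd (max N1 N2) hatlam := fun a ha => h2 a (le_trans (le_max_right _ _) ha)
  exact main_aux hlam hb1 hslam _ hatlam hhatlam hb2 hshatlam hdom (Nat.le_add_left _ _)
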